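/- Let X be a complex Banach space, B its open unit ball, and F : B → X holomorphic and pseudo-dissipative with constants θ, a, b, ε. Then F has unit radius of boundedness: for every 0 < r < 1, sup_{‖z‖ ≤ r} ‖F(z)‖ < ∞; explicitly, ‖F(z) − F(0)‖ ≤ ‖z‖(|a| + e·V(e^{iθ}A − a·id)) + 4‖z‖²‖F(0)‖ + 8‖z‖²·((1 − ‖z‖ln 2)/(1−‖z‖)²)·(a − m(e^{iθ}A)), where A = DF(0). -/

import Mathlib

open Complex Metric
open scoped ComplexConjugate Nat Topology
open Filter Set

theorem circleAverage_inv_pow_mul {f : ℂ → ℂ} {ρ : ℝ} (hρ : 0 < ρ) (n : ℕ)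
    (hf : DifferentiableOn ℂ f (closedBall 0 ρ)) :
    Real.circleAverage (fun ζ ↦ (ζ ^ n)⁻¹ * f ζ) 0 ρ = (n ! : ℂ)⁻¹ * iteratedDeriv n f 0 := by
  have h := hf.circleIntegral_one_div_sub_center_pow_smul hρ n
  rw [Real.circleAverage_eq_circleIntegral hρ.ne']
  have e : (∮ z in C(0, ρ), (z - 0)⁻¹ • ((z ^ n)⁻¹ * f z)) =
      ∮ z in C(0, ρ), (1 / (z - 0) ^ (n + 1)) • f z := by
    congr 1
    ext z
    simp only [sub_zero, smul_eq_mul, pow_succ, one_div, mul_inv]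
    ring
  rw [e, h, smul_eq_mul, smul_eq_mul, ← mul_assoc]
  congr 1
  have := Complex.two_pi_I_ne_zero
  field_simp

/-- Herglotz-type coefficient estimate on a circle of radius `ρ`. -/
theorem norm_taylor_coeff_add_le_of_re_conj_mul_le {g : ℂ → ℂ} {ρ β : ℝ} (hρ : 0 < ρ)
    (hβ : 0 ≤ β) (hg : DifferentiableOn ℂ g (closedBall 0 ρ))
    (hre : ∀ ζ : ℂ, ‖ζ‖ = ρ → (conj ζ * g ζ).re ≤ β) (n : ℕ) :
    ‖(ρ : ℂ) ^ (2 * (n + 2)) * (((n + 2)! : ℂ)⁻¹ * iteratedDeriv (n + 2) g 0)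
      + (ρ : ℂ) ^ 2 * conj (if n = 0 then g 0 else 0)‖
      ≤ 2 * ρ ^ (n + 1) * (2 * β - ρ ^ 2 * (deriv g 0).re) := by
  have hgc : ContinuousOn g (sphere 0 ρ) := hg.continuousOn.mono sphere_subset_closedBall
  have hne : ∀ ζ ∈ sphere (0 : ℂ) ρ, ζ ≠ 0 := fun ζ hζ ↦ ne_of_mem_sphere hζ hρ.ne'
  have habs : |ρ| = ρ := abs_of_pos hρ
  have hint : ∀ {E : Type} [NormedAddCommGroup E] {f : ℂ → E}, ContinuousOn f (sphere 0 ρ) →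
      CircleIntegrable f 0 ρ := fun h ↦ h.circleIntegrable hρ.le
  have hconj : ∀ ζ ∈ sphere (0 : ℂ) ρ, conj ζ = (ρ : ℂ) ^ 2 * ζ⁻¹ := by
    intro ζ hζ
    have : ‖ζ‖ = ρ := by simpa using hζ
    rw [eq_mul_inv_iff_mul_eq₀ (hne ζ hζ), mul_comm, Complex.mul_conj, Complex.normSq_eq_norm_sq,
      this]
    push_cast; rfl
  set H : ℂ → ℝ := fun ζ ↦ (conj ζ * g ζ).re with hH
  have hHc : ContinuousOn H (sphere 0 ρ) :=
    Complex.continuous_re.comp_continuousOn (Complex.continuous_conj.continuousOn.mul hgc)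
  have avgH : Real.circleAverage H 0 ρ = ρ ^ 2 * (deriv g 0).re := by
    have h1 := circleAverage_inv_pow_mul hρ 1 hg
    have h2 := Complex.reCLM.circleAverage_comp_comm (f := fun ζ ↦ (ρ : ℂ) ^ 2 * ((ζ ^ 1)⁻¹ * g ζ))
      (c := 0) (R := ρ) (hint (by
        refine continuousOn_const.mul (ContinuousOn.mul (ContinuousOn.inv₀ (by fun_prop) ?_) hgc)
        intro ζ hζ; simpa using hne ζ hζ))
    have h3 := Real.circleAverage_fun_smul (a := (ρ : ℂ) ^ 2) (f := fun ζ ↦ ((ζ ^ 1)⁻¹ * g ζ))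
      (c := 0) (R := ρ)
    simp only [smul_eq_mul] at h3
    rw [h3, h1] at h2
    have h4 : Real.circleAverage H 0 ρ = Real.circleAverage
        (⇑Complex.reCLM ∘ fun ζ ↦ (ρ : ℂ) ^ 2 * ((ζ ^ 1)⁻¹ * g ζ)) 0 ρ := by
      apply Real.circleAverage_congr_sphere
      rw [habs]
      intro ζ hζ
      simp only [hH, Function.comp, Complex.reCLM_apply]
      rw [hconj ζ hζ, pow_one, mul_assoc]
    rw [h4, h2]
    simp [← Complex.ofReal_pow]
  have avgK : Real.circleAverage (fun ζ ↦ (2 * (H ζ : ℂ)) * conj ζ ^ (n + 1)) 0 ρ =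
      (ρ : ℂ) ^ (2 * (n + 2)) * (((n + 2)! : ℂ)⁻¹ * iteratedDeriv (n + 2) g 0)
      + (ρ : ℂ) ^ 2 * conj (if n = 0 then g 0 else 0) := by
    have h1 := circleAverage_inv_pow_mul hρ (n + 2) hg
    have c1 : ContinuousOn (fun ζ ↦ (ζ ^ (n + 2))⁻¹ * g ζ) (sphere 0 ρ) := by
      refine ContinuousOn.mul (ContinuousOn.inv₀ (by fun_prop) ?_) hgc
      intro ζ hζ; exact pow_ne_zero _ (hne ζ hζ)
    have c2 : ContinuousOn (fun ζ ↦ ζ ^ n * g ζ) (sphere 0 ρ) :=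
      ContinuousOn.mul (by fun_prop) hgc
    have h2 : Real.circleAverage (fun ζ ↦ ζ ^ n * g ζ) 0 ρ = if n = 0 then g 0 else 0 := by
      rw [DiffContOnCl.circleAverage]
      · rcases n with _ | n <;> simp
      · rw [habs]
        refine (DifferentiableOn.mono ?_ closure_ball_subset_closedBall).diffContOnCl
        exact DifferentiableOn.mul (by fun_prop) hg
    have h2' := Complex.conjCLE.toContinuousLinearMap.circleAverage_comp_comm (hint c2)
    rw [h2] at h2'
    have key : Real.circleAverage (fun ζ ↦ (2 * (H ζ : ℂ)) * conj ζ ^ (n + 1)) 0 ρ =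
      Real.circleAverage (fun ζ ↦ (ρ : ℂ) ^ (2 * (n + 2)) • ((ζ ^ (n + 2))⁻¹ * g ζ) +
        (ρ : ℂ) ^ 2 • (conj (ζ ^ n * g ζ))) 0 ρ := by
      apply Real.circleAverage_congr_sphere
      rw [habs]
      intro ζ hζ
      simp only [hH]
      have e : (2 * ((conj ζ * g ζ).re : ℂ)) = conj ζ * g ζ + ζ * conj (g ζ) := by
        have := Complex.add_conj (conj ζ * g ζ)
        rw [map_mul, Complex.conj_conj] at this
        rw [this]; push_cast; ring
      rw [e]
      have e2 := hconj ζ hζ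
      have e3 : ζ * conj ζ = (ρ : ℂ) ^ 2 := by
        rw [e2]; field_simp [hne ζ hζ]
      have e4 : (ρ : ℂ) ^ (2 * (n + 2)) * (ζ ^ (n + 2))⁻¹ = conj ζ ^ (n + 2) := by
        rw [e2, mul_pow, inv_pow, pow_mul]
      rw [smul_eq_mul, smul_eq_mul, ← mul_assoc, e4, ← e3, map_mul, map_pow]
      ring
    rw [key, Real.circleAverage_fun_add, Real.circleAverage_fun_smul, Real.circleAverage_fun_smul,
      h1]
    · congr 1
      rw [smul_eq_mul]
      congr 1
    · exact hint (c1.fun_const_smul _)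
    · exact hint ((Complex.continuous_conj.comp_continuousOn c2).fun_const_smul _)
  rw [← avgK]
  have b1 : ‖Real.circleAverage (fun ζ ↦ (2 * (H ζ : ℂ)) * conj ζ ^ (n + 1)) 0 ρ‖ ≤
      Real.circleAverage (fun ζ ↦ ‖(2 * (H ζ : ℂ)) * conj ζ ^ (n + 1)‖) 0 ρ := by
    rw [Real.circleAverage_def, Real.circleAverage_def, norm_smul, smul_eq_mul, Real.norm_of_nonneg (by positivity)]
    gcongr
    exact intervalIntegral.norm_integral_le_integral_norm Real.two_pi_pos.le
  refine b1.trans ?_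
  have b2 : Real.circleAverage (fun ζ ↦ ‖(2 * (H ζ : ℂ)) * conj ζ ^ (n + 1)‖) 0 ρ ≤
      Real.circleAverage (fun ζ ↦ (2 * ρ ^ (n + 1)) • (2 * β - H ζ)) 0 ρ := by
    apply Real.circleAverage_mono
    · apply hint
      apply ContinuousOn.norm
      exact (continuousOn_const.mul (Complex.continuous_ofReal.comp_continuousOn hHc)).mul
        (Complex.continuous_conj.continuousOn.pow _)
    · exact hint ((continuousOn_const.sub hHc).fun_const_smul _)
    · rw [habs]
      intro ζ hζ
      have hζ' : ‖ζ‖ = ρ := by simpa using hζ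
      have := hre ζ hζ'
      rw [norm_mul, norm_mul, norm_pow, Complex.norm_conj, hζ', Complex.norm_real, Complex.norm_ofNat,
        smul_eq_mul, Real.norm_eq_abs]
      have : |H ζ| ≤ 2 * β - H ζ := by
        rw [abs_le]; constructor <;> simp only [hH] <;> linarith
      have : ρ ^ (n+1) * |H ζ| ≤ ρ ^ (n+1) * (2 * β - H ζ) := by gcongr
      linarith
  refine b2.trans (le_of_eq ?_)
  rw [Real.circleAverage_fun_smul, Real.circleAverage_fun_sub (hint continuousOn_const) (hint hHc),
    avgH, Real.circleAverage_const, smul_eq_mul]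

theorem norm_taylor_coeff_add_le {g : ℂ → ℂ} {ε b : ℝ} (hε : 0 < ε)
    (hg : DifferentiableOn ℂ g (ball 0 1))
    (hre : ∀ ζ : ℂ, 1 - ε < ‖ζ‖ → ‖ζ‖ < 1 → (conj ζ * g ζ).re ≤ b * (1 - ‖ζ‖ ^ 2)) (n : ℕ) :
    ‖((n + 2)! : ℂ)⁻¹ * iteratedDeriv (n + 2) g 0 + conj (if n = 0 then g 0 else 0)‖
      ≤ 2 * (-(deriv g 0).re) := by
  set c := ((n + 2)! : ℂ)⁻¹ * iteratedDeriv (n + 2) g 0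
  set d := conj (if n = 0 then g 0 else 0)
  have hl : Tendsto (fun ρ : ℝ ↦ ‖(ρ : ℂ) ^ (2 * (n + 2)) * c + (ρ : ℂ) ^ 2 * d‖) (𝓝[<] 1)
      (𝓝 ‖c + d‖) := by
    have : Continuous (fun ρ : ℝ ↦ ‖(ρ : ℂ) ^ (2 * (n + 2)) * c + (ρ : ℂ) ^ 2 * d‖) := by fun_prop
    simpa using (this.tendsto 1).mono_left nhdsWithin_le_nhds
  have hr : Tendsto (fun ρ : ℝ ↦ 2 * ρ ^ (n + 1) *
      (2 * (|b| * (1 - ρ ^ 2)) - ρ ^ 2 * (deriv g 0).re)) (𝓝[<] 1) (𝓝 (2 * (-(deriv g 0).re))) := by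
    have : Continuous (fun ρ : ℝ ↦ 2 * ρ ^ (n + 1) *
      (2 * (|b| * (1 - ρ ^ 2)) - ρ ^ 2 * (deriv g 0).re)) := by fun_prop
    simpa using (this.tendsto 1).mono_left nhdsWithin_le_nhds
  refine le_of_tendsto_of_tendsto hl hr ?_
  have hev : ∀ᶠ ρ : ℝ in 𝓝[<] 1, max 0 (1 - ε) < ρ :=
    nhdsWithin_le_nhds (lt_mem_nhds (by simp [hε]))
  filter_upwards [hev, self_mem_nhdsWithin] with ρ h1 h2
  have h2' : ρ < 1 := h2
  obtain ⟨h0, h1⟩ := max_lt_iff.1 h1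
  have : 0 ≤ 1 - ρ ^ 2 := by nlinarith
  refine norm_taylor_coeff_add_le_of_re_conj_mul_le h0 (by positivity)
    (hg.mono (closedBall_subset_ball h2')) (fun ζ hζ ↦ ?_) n
  refine (hre ζ (by rwa [hζ]) (by rwa [hζ])).trans ?_
  rw [hζ]
  gcongr
  exact le_abs_self b

theorem coeff_unique_of_hasSum {E : Type*} [NormedAddCommGroup E] [NormedSpace ℂ E]
    {f : ℂ → E} {p q : ℕ → E}
    (hp : ∀ᶠ ζ : ℂ in 𝓝 0, HasSum (fun n ↦ ζ ^ n • p n) (f ζ))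
    (hq : ∀ᶠ ζ : ℂ in 𝓝 0, HasSum (fun n ↦ ζ ^ n • q n) (f ζ)) : p = q := by
  let ser (r : ℕ → E) : FormalMultilinearSeries ℂ ℂ E :=
    fun n ↦ ContinuousMultilinearMap.mkPiRing ℂ (Fin n) (r n)
  have hser (r : ℕ → E) (n : ℕ) : (ser r).coeff n = r n := by
    simp only [ser, FormalMultilinearSeries.coeff, ContinuousMultilinearMap.mkPiRing_apply]
    simp
  have aux (r : ℕ → E) (hr : ∀ᶠ ζ : ℂ in 𝓝 0, HasSum (fun n ↦ ζ ^ n • r n) (f ζ)) :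
      HasFPowerSeriesAt f (ser r) 0 :=
    hasFPowerSeriesAt_iff.2 (by simpa only [hser, zero_add] using hr)
  funext n
  rw [← hser p, ← hser q, (aux p hp).eq_formalMultilinearSeries (aux q hq)]

/-- The homogeneous Taylor term of degree `n` of `G` at the origin. -/
noncomputable def taylorTerm {X : Type*} [NormedAddCommGroup X] [NormedSpace ℂ X]
    (G : X → X) (n : ℕ) (x : X) : X :=
  (n ! : ℂ)⁻¹ • iteratedDeriv n (fun ζ : ℂ ↦ G (ζ • x)) 0

section

variable {X : Type*} [NormedAddCommGroup X] [NormedSpace ℂ X] {G : X → X}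

theorem differentiableOn_slice (hG : DifferentiableOn ℂ G (ball 0 1)) {x : X} {R : ℝ}
    (hR : R * ‖x‖ ≤ 1) : DifferentiableOn ℂ (fun ζ : ℂ ↦ G (ζ • x)) (ball 0 R) := by
  refine hG.comp (by fun_prop) fun ζ hζ ↦ ?_
  rw [mem_ball_zero_iff] at hζ ⊢
  rw [norm_smul]
  rcases eq_or_ne x 0 with rfl | hx
  · simp
  · exact (mul_lt_mul_of_pos_right hζ (norm_pos_iff.2 hx)).trans_le hR

theorem hasSum_smul_taylorTerm [CompleteSpace X] (hG : DifferentiableOn ℂ G (ball 0 1)) {x : X}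
    {ζ : ℂ} (hζ : ‖ζ • x‖ < 1) : HasSum (fun n ↦ ζ ^ n • taylorTerm G n x) (G (ζ • x)) := by
  rw [norm_smul] at hζ
  obtain ⟨R, hR, hR'⟩ : ∃ R, ‖ζ‖ < R ∧ R * ‖x‖ ≤ 1 := by
    have hc : ContinuousAt (fun R : ℝ ↦ R * ‖x‖) ‖ζ‖ := by fun_prop
    have h1 : ∀ᶠ R in 𝓝[>] ‖ζ‖, R * ‖x‖ < 1 :=
      nhdsWithin_le_nhds (hc.eventually_lt continuousAt_const hζ)
    obtain ⟨R, h2, h3⟩ := (h1.and self_mem_nhdsWithin).exists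
    exact ⟨R, h3, h2.le⟩
  have := Complex.hasSum_taylorSeries_on_ball (differentiableOn_slice hG hR')
    (mem_ball_zero_iff.2 hR)
  simpa only [taylorTerm, sub_zero, smul_comm (ζ ^ _)] using this

theorem eventually_norm_smul_lt_one (x : X) : ∀ᶠ ζ : ℂ in 𝓝 0, ‖ζ • x‖ < 1 := by
  have hc : ContinuousAt (fun ζ : ℂ ↦ ‖ζ • x‖) 0 := by fun_prop
  exact hc.eventually_lt continuousAt_const (by simp)

theorem taylorTerm_smul [CompleteSpace X] (hG : DifferentiableOn ℂ G (ball 0 1)) (n : ℕ) (c : ℂ)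
    (x : X) : taylorTerm G n (c • x) = c ^ n • taylorTerm G n x := by
  have := coeff_unique_of_hasSum (f := fun ζ : ℂ ↦ G (ζ • c • x))
    (p := fun n ↦ taylorTerm G n (c • x)) (q := fun n ↦ c ^ n • taylorTerm G n x) ?_ ?_
  · exact congrFun this n
  · filter_upwards [eventually_norm_smul_lt_one (c • x)] with ζ hζ
    exact hasSum_smul_taylorTerm hG hζ
  · filter_upwards [eventually_norm_smul_lt_one (c • x)] with ζ hζ
    rw [smul_smul] at hζ ⊢
    simpa [mul_pow, mul_smul] using hasSum_smul_taylorTerm hG hζ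

theorem map_taylorTerm [CompleteSpace X] (hG : DifferentiableOn ℂ G (ball 0 1)) (n : ℕ) (x : X)
    (ℓ : X →L[ℂ] ℂ) :
    ℓ (taylorTerm G n x) = (n ! : ℂ)⁻¹ * iteratedDeriv n (fun ζ : ℂ ↦ ℓ (G (ζ • x))) 0 := by
  have := coeff_unique_of_hasSum (f := fun ζ : ℂ ↦ ℓ (G (ζ • x)))
    (p := fun n ↦ ℓ (taylorTerm G n x))
    (q := fun n ↦ (n ! : ℂ)⁻¹ * iteratedDeriv n (fun ζ : ℂ ↦ ℓ (G (ζ • x))) 0) ?_ ?_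
  · exact congrFun this n
  · filter_upwards [eventually_norm_smul_lt_one x] with ζ hζ
    simpa using ℓ.hasSum (hasSum_smul_taylorTerm hG hζ)
  · obtain ⟨R, hR0, hR⟩ : ∃ R : ℝ, 0 < R ∧ R * ‖x‖ ≤ 1 := by
      refine ⟨1 / (‖x‖ + 1), by positivity, ?_⟩
      rw [one_div_mul_eq_div, div_le_one (by positivity)]; linarith
    filter_upwards [ball_mem_nhds (0 : ℂ) hR0] with ζ hζ
    have := Complex.hasSum_taylorSeries_on_ball
      (ℓ.differentiable.comp_differentiableOn (differentiableOn_slice hG hR)) hζ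
    simpa [mul_left_comm, Function.comp_def] using this

theorem taylorTerm_zero (x : X) : taylorTerm G 0 x = G 0 := by simp [taylorTerm]

theorem taylorTerm_one (hG : DifferentiableOn ℂ G (ball 0 1)) (x : X) :
    taylorTerm G 1 x = fderiv ℂ G 0 x := by
  have h1 : HasFDerivAt G (fderiv ℂ G 0) ((0 : ℂ) • x) := by
    rw [zero_smul]
    exact (hG.differentiableAt (ball_mem_nhds 0 one_pos)).hasFDerivAt
  have h2 : HasDerivAt (fun ζ : ℂ ↦ ζ • x) ((1 : ℂ) • x) 0 := (hasDerivAt_id _).smul_const x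
  have := (h1.comp_hasDerivAt (0 : ℂ) h2).deriv
  simpa [taylorTerm, iteratedDeriv_one, Function.comp_def] using this

theorem exists_norm_taylorTerm_le [CompleteSpace X] (hG : DifferentiableOn ℂ G (ball 0 1)) :
    ∃ M κ : ℝ, 0 ≤ M ∧ 0 ≤ κ ∧ ∀ n x, ‖taylorTerm G n x‖ ≤ M * (κ * ‖x‖) ^ n := by
  have hc : ContinuousAt G 0 :=
    (hG.differentiableAt (ball_mem_nhds 0 one_pos)).continuousAt
  have hev : ∀ᶠ x in 𝓝 (0 : X), ‖G x‖ < ‖G 0‖ + 1 :=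
    hc.norm.eventually_lt continuousAt_const (by simp)
  obtain ⟨δ, hδ, hδ'⟩ := Metric.eventually_nhds_iff.1 hev
  set r := min (δ / 2) (1 / 2) with hr
  have hr0 : 0 < r := by positivity
  have hrδ : r < δ := (min_le_left _ _).trans_lt (by linarith)
  have hr1 : r < 1 := (min_le_right _ _).trans_lt (by norm_num)
  refine ⟨‖G 0‖ + 1, r⁻¹, by positivity, by positivity, fun n x ↦ ?_⟩
  have hunit : ∀ v : X, ‖v‖ ≤ 1 → ‖taylorTerm G n v‖ ≤ (‖G 0‖ + 1) * r⁻¹ ^ n := by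
    intro v hv
    have hd : DifferentiableOn ℂ (fun ζ : ℂ ↦ G (ζ • v)) (closure (ball 0 r)) :=
      (differentiableOn_slice hG (R := 1) (by linarith)).mono
        (closure_ball_subset_closedBall.trans (closedBall_subset_ball hr1))
    have := Complex.norm_iteratedDeriv_le_of_forall_mem_sphere_norm_le n hr0
      hd.diffContOnCl (C := ‖G 0‖ + 1) (fun ζ hζ ↦ (hδ' (by
        rw [dist_zero_right, norm_smul, mem_sphere_zero_iff_norm.1 hζ]
        nlinarith)).le)
    rw [taylorTerm, norm_smul, norm_inv, Complex.norm_natCast]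
    have hf : (0 : ℝ) < n ! := by exact_mod_cast n.factorial_pos
    rw [inv_mul_le_iff₀ hf]
    refine this.trans (le_of_eq ?_)
    rw [inv_pow]; ring
  rcases eq_or_ne x 0 with rfl | hx
  · rcases n with _ | n
    · simp [taylorTerm_zero]
    · have := taylorTerm_smul hG (n + 1) 0 (0 : X)
      rw [smul_zero] at this
      rw [this]; simp
  · have hx0 : ‖x‖ ≠ 0 := norm_ne_zero_iff.2 hx
    have e : x = (‖x‖ : ℂ) • ((‖x‖ : ℂ)⁻¹ • x) := by
      rw [smul_smul, mul_inv_cancel₀ (by exact_mod_cast hx0), one_smul]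
    have h1 := hunit ((‖x‖ : ℂ)⁻¹ • x) (by simp [norm_smul, hx0])
    conv_lhs => rw [e]
    rw [taylorTerm_smul hG, norm_smul, norm_pow, Complex.norm_real, norm_norm, mul_pow]
    calc _ ≤ ‖x‖ ^ n * ((‖G 0‖ + 1) * r⁻¹ ^ n) := by gcongr
      _ = _ := by ring

theorem differentiable_taylorTerm_comp [CompleteSpace X] (hG : DifferentiableOn ℂ G (ball 0 1))
    (n : ℕ) (u : ℂ → X) (hu : Differentiable ℂ u) :
    Differentiable ℂ (fun ζ ↦ taylorTerm G n (u ζ)) := by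
  obtain ⟨M, κ, hM, hκ, hbd⟩ := exists_norm_taylorTerm_le hG
  induction n using Nat.strong_induction_on with
  | _ n ih =>
  intro ζ₀
  obtain ⟨R, hR0, hR⟩ : ∃ R : ℝ, 0 < R ∧ ∀ ζ ∈ ball ζ₀ 1, ‖u ζ‖ ≤ R := by
    obtain ⟨R, hR⟩ := (isCompact_closedBall ζ₀ 1).exists_bound_of_continuousOn
      hu.continuous.continuousOn
    exact ⟨max R 1, by positivity, fun ζ hζ ↦ (hR ζ (ball_subset_closedBall hζ)).trans
      (le_max_left _ _)⟩
  set Q : ℝ → ℂ → X := fun s ζ ↦ ((s : ℂ) ^ n)⁻¹ •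
    (G ((s : ℂ) • u ζ) - ∑ k ∈ Finset.range n, (s : ℂ) ^ k • taylorTerm G k (u ζ)) with hQ
  have hsmall : ∀ᶠ s : ℝ in 𝓝[>] 0, s * R < 1 := nhdsWithin_le_nhds
    (ContinuousAt.eventually_lt (by fun_prop) continuousAt_const (by simp))
  have hsmall' : ∀ᶠ s : ℝ in 𝓝[>] 0, s * (κ * R) < 1 / 2 := nhdsWithin_le_nhds
    (ContinuousAt.eventually_lt (by fun_prop) continuousAt_const (by simp))
  have hnorm : ∀ s : ℝ, 0 < s → s * R < 1 → ∀ ζ ∈ ball ζ₀ 1, ‖(s : ℂ) • u ζ‖ < 1 := by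
    intro s hs hsR ζ hζ
    rw [norm_smul, Complex.norm_real, Real.norm_of_nonneg hs.le]
    have := mul_le_mul_of_nonneg_left (hR ζ hζ) hs.le
    linarith
  have hlim : TendstoLocallyUniformlyOn Q (fun ζ ↦ taylorTerm G n (u ζ)) (𝓝[>] 0)
      (ball ζ₀ 1) := by
    apply TendstoUniformlyOn.tendstoLocallyUniformlyOn
    rw [Metric.tendstoUniformlyOn_iff]
    intro η hη
    have hη' : ∀ᶠ s : ℝ in 𝓝[>] 0, s * (2 * (M * (κ * R) ^ (n + 1))) < η := nhdsWithin_le_nhds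
      (ContinuousAt.eventually_lt (by fun_prop) continuousAt_const (by simpa using hη))
    filter_upwards [hsmall, hsmall', hη', self_mem_nhdsWithin] with s h1 h2 h3 hs ζ hζ
    have hs0 : 0 < s := hs
    have hsc : (s : ℂ) ≠ 0 := by exact_mod_cast hs0.ne'
    have hsum := hasSum_smul_taylorTerm hG (hnorm s hs0 h1 ζ hζ)
    have hsum' := (hasSum_nat_add_iff' (n + 1)).2 hsum
    rw [Finset.sum_range_succ] at hsum'
    have e : Q s ζ - taylorTerm G n (u ζ) = ((s : ℂ) ^ n)⁻¹ • (G ((s : ℂ) • u ζ) -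
        (∑ k ∈ Finset.range n, (s : ℂ) ^ k • taylorTerm G k (u ζ)
          + (s : ℂ) ^ n • taylorTerm G n (u ζ))) := by
      rw [← sub_sub, smul_sub _ _ ((s : ℂ) ^ n • taylorTerm G n (u ζ)),
        inv_smul_smul₀ (pow_ne_zero _ hsc)]
    have hgeo : HasSum (fun j : ℕ ↦ M * (s * (κ * R)) ^ (n + 1) * (s * (κ * R)) ^ j)
        (M * (s * (κ * R)) ^ (n + 1) * (1 - s * (κ * R))⁻¹) :=
      (hasSum_geometric_of_lt_one (by positivity) (by linarith)).mul_left _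
    have hle := hsum'.norm_le_of_bounded hgeo (fun j ↦ by
      rw [norm_smul, norm_pow, Complex.norm_real, Real.norm_of_nonneg hs0.le]
      calc _ ≤ s ^ (j + (n + 1)) * (M * (κ * ‖u ζ‖) ^ (j + (n + 1))) := by gcongr; exact hbd _ _
        _ ≤ s ^ (j + (n + 1)) * (M * (κ * R) ^ (j + (n + 1))) := by gcongr; exact hR ζ hζ
        _ = _ := by rw [mul_assoc M, ← pow_add, add_comm (n + 1) j, mul_pow]; ring)
    rw [dist_comm, dist_eq_norm, e, norm_smul, norm_inv, norm_pow, Complex.norm_real,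
      Real.norm_of_nonneg hs0.le]
    have hinv : (1 - s * (κ * R))⁻¹ ≤ 2 := by
      rw [inv_le_comm₀ (by linarith) two_pos]; linarith
    calc _ ≤ (s ^ n)⁻¹ * (M * (s * (κ * R)) ^ (n + 1) * 2) := by
          gcongr; exact hle.trans (by gcongr)
      _ = s * (2 * (M * (κ * R) ^ (n + 1))) := by rw [mul_pow, pow_succ s]; field_simp
      _ < η := h3
  have hQd : ∀ᶠ s : ℝ in 𝓝[>] 0, DifferentiableOn ℂ (Q s) (ball ζ₀ 1) := by
    filter_upwards [hsmall, self_mem_nhdsWithin] with s h1 hs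
    have h2 : DifferentiableOn ℂ (fun ζ ↦ G ((s : ℂ) • u ζ)) (ball ζ₀ 1) :=
      hG.comp (hu.const_smul (s : ℂ)).differentiableOn
        fun ζ hζ ↦ mem_ball_zero_iff.2 (hnorm s hs h1 ζ hζ)
    have h3 : DifferentiableOn ℂ
        (fun ζ ↦ ∑ k ∈ Finset.range n, (s : ℂ) ^ k • taylorTerm G k (u ζ)) (ball ζ₀ 1) :=
      DifferentiableOn.fun_sum fun k hk ↦
        ((ih k (Finset.mem_range.1 hk)).const_smul ((s : ℂ) ^ k)).differentiableOn
    exact (h2.sub h3).const_smul (((s : ℂ) ^ n)⁻¹)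
  exact (hlim.differentiableOn hQd isOpen_ball).differentiableAt (ball_mem_nhds ζ₀ one_pos)

end

theorem exists_forall_norm_add_smul_le {X : Type*} [NormedAddCommGroup X] [NormedSpace ℂ X]
    {P : X → X} {n : ℕ} {C K : ℝ} (hC : 0 ≤ C)
    (hdiff : ∀ u : ℂ → X, Differentiable ℂ u → Differentiable ℂ (fun ζ ↦ P (u ζ)))
    (hbound : ∀ x, ‖P x‖ ≤ C * ‖x‖ ^ n)
    (hK : 0 ≤ K)
    (hnum : ∀ (w : X) (ws : X →L[ℂ] ℂ), ‖ws‖ = 1 → ws w = (‖w‖ : ℂ) → w ≠ 0 →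
      ‖ws (P w)‖ ≤ K * ‖w‖ ^ n)
    {R K' : ℝ} (hR : 1 ≤ R) (hK' : K < K') :
    ∃ δ > 0, ∀ h, h ≤ δ → ∀ s, 1 ≤ s → s ≤ R → ∀ y : X, ‖y‖ ≤ s → ∀ c : ℂ, ‖c‖ ≤ h →
      ‖y + c • P y‖ ≤ s + h * (K' * s ^ n) := by
  set C₁ := C * R ^ n with hC₁
  set L := 2 * (C * (R + C₁) ^ n) with hL
  have hC₁0 : 0 ≤ C₁ := by positivity
  have hL0 : 0 ≤ L := by positivity
  have hcont : Continuous (fun h : ℝ ↦ h * L + K * (1 + h * C₁) ^ n) := by fun_prop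
  have hev : ∀ᶠ h in 𝓝 (0 : ℝ), h * L + K * (1 + h * C₁) ^ n < K' :=
    hcont.continuousAt.eventually_lt continuousAt_const (by simpa using hK')
  obtain ⟨δ, hδ, hδ'⟩ := Metric.eventually_nhds_iff.1 hev
  refine ⟨min (δ / 2) (1 / 2), by positivity, fun h hh s hs1 hsR y hy c hc ↦ ?_⟩
  have hh1 : h ≤ δ / 2 := hh.trans (min_le_left _ _)
  have hh2 : h ≤ 1 / 2 := hh.trans (min_le_right _ _)
  have h0 : 0 ≤ h := (norm_nonneg c).trans hc
  have hs0 : 0 ≤ s := by linarith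
  have hsmall := hδ' (y := h) (by rw [Real.dist_eq, sub_zero, abs_of_nonneg h0]; linarith)
  have hPy : ‖P y‖ ≤ C₁ := (hbound y).trans (by rw [hC₁]; gcongr; exact hy.trans hsR)
  set w := y + c • P y with hw
  have hws : ‖w‖ ≤ s * (1 + h * C₁) := by
    calc ‖w‖ ≤ ‖y‖ + ‖c‖ * ‖P y‖ := by rw [hw, ← norm_smul]; exact norm_add_le _ _
      _ ≤ s + h * C₁ := by gcongr
      _ ≤ s * (1 + h * C₁) := by nlinarith [mul_nonneg h0 hC₁0]
  have hlip : ‖P w - P y‖ ≤ L * h := by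
    have hb : ∀ ζ : ℂ, ‖ζ‖ ≤ 1 → ‖P (y + ζ • P y)‖ ≤ C * (R + C₁) ^ n := by
      intro ζ hζ
      refine (hbound _).trans ?_
      gcongr
      calc ‖y + ζ • P y‖ ≤ ‖y‖ + ‖ζ‖ * ‖P y‖ := by rw [← norm_smul]; exact norm_add_le _ _
        _ ≤ R + 1 * C₁ := by gcongr; exact hy.trans hsR
        _ = R + C₁ := by ring
    have hd : Differentiable ℂ (fun ζ : ℂ ↦ P (y + ζ • P y)) := hdiff _ (by fun_prop)
    have := Complex.dist_le_div_mul_dist_of_mapsTo_ball (f := fun ζ : ℂ ↦ P (y + ζ • P y)) (c := 0)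
      (R₁ := 1) (R₂ := L) (z := c) hd.differentiableOn (fun ζ hζ ↦ by
        rw [mem_closedBall, dist_eq_norm]
        have h1 := hb ζ (by simpa using (mem_ball_zero_iff.1 hζ).le)
        have h2 := hb 0 (by simp)
        refine (norm_sub_le _ _).trans ?_
        rw [hL]; linarith) (by rw [mem_ball_zero_iff]; linarith)
    simp only [zero_smul, add_zero, dist_eq_norm, sub_zero, div_one] at this
    exact this.trans (by gcongr)
  by_cases hw0 : w = 0
  · rw [hw0, norm_zero]; have : 0 ≤ K' := by linarith
    positivity
  obtain ⟨ws, hws1, hws2⟩ := exists_dual_vector ℂ w (norm_ne_zero_iff.2 hw0)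
  replace hws2 : ws w = (‖w‖ : ℂ) := hws2
  have hn := hnum w ws hws1 hws2 hw0
  have e : (‖w‖ : ℂ) = ws y + c * ws (P y - P w) + c * ws (P w) := by
    rw [← hws2, hw]; simp only [map_add, map_smul, smul_eq_mul, map_sub]; ring
  have hle : ∀ x, ‖ws x‖ ≤ ‖x‖ := fun x ↦ by simpa [hws1] using ws.le_opNorm x
  calc ‖w‖ = ‖(‖w‖ : ℂ)‖ := by simp
    _ ≤ ‖ws y‖ + ‖c‖ * ‖ws (P y - P w)‖ + ‖c‖ * ‖ws (P w)‖ := by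
        rw [e, ← norm_mul, ← norm_mul]; exact norm_add₃_le
    _ ≤ s + h * (L * h) + h * (K * (s * (1 + h * C₁)) ^ n) := by
        gcongr
        · exact (hle y).trans hy
        · exact (hle _).trans (by rwa [norm_sub_rev])
        · exact hn.trans (by gcongr)
    _ = s + h * (h * L * 1 + K * (1 + h * C₁) ^ n * s ^ n) := by rw [mul_pow]; ring
    _ ≤ s + h * (h * L * s ^ n + K * (1 + h * C₁) ^ n * s ^ n) := by
        gcongr; exact one_le_pow₀ hs1
    _ = s + h * ((h * L + K * (1 + h * C₁) ^ n) * s ^ n) := by ring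
    _ ≤ s + h * (K' * s ^ n) := by gcongr

/-- Explicit Euler iterates, with step `c`, for the flow generated by `P`. -/
def eulerIterate {X : Type*} [AddCommGroup X] [Module ℂ X] (P : X → X) (x : X) (c : ℂ) : ℕ → X
  | 0 => x
  | j + 1 => eulerIterate P x c j + c • P (eulerIterate P x c j)

theorem mul_norm_le_of_supersolution {X : Type*} [NormedAddCommGroup X] [NormedSpace ℂ X]
    {P : X → X} {n : ℕ} {C K : ℝ} (hC : 0 ≤ C)
    (hdiff : ∀ u : ℂ → X, Differentiable ℂ u → Differentiable ℂ (fun ζ ↦ P (u ζ)))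
    (hbound : ∀ x, ‖P x‖ ≤ C * ‖x‖ ^ n)
    (hK : 0 ≤ K)
    (hnum : ∀ (w : X) (ws : X →L[ℂ] ℂ), ‖ws‖ = 1 → ws w = (‖w‖ : ℂ) → w ≠ 0 →
      ‖ws (P w)‖ ≤ K * ‖w‖ ^ n)
    {K' T : ℝ} (hK' : K < K') (hT : 0 < T) {ρ : ℝ → ℝ} (hρ0 : ρ 0 = 1)
    (hρ : ∀ t h, 0 ≤ t → 0 ≤ h → t + h ≤ T → ρ t + h * (K' * ρ t ^ n) ≤ ρ (t + h))
    (hρ1 : ∀ t, 0 ≤ t → t ≤ T → 1 ≤ ρ t) {x : X} (hx : ‖x‖ = 1) :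
    ‖P x‖ ≤ ρ T / T := by
  have hρT : ∀ t, 0 ≤ t → t ≤ T → ρ t ≤ ρ T := by
    intro t h0 h1
    have := hρ t (T - t) h0 (by linarith) (by linarith)
    have h2 := hρ1 t h0 h1
    have : 0 ≤ (T - t) * (K' * ρ t ^ n) :=
      mul_nonneg (by linarith) (mul_nonneg (by linarith) (by positivity))
    rw [add_sub_cancel] at *
    linarith
  obtain ⟨δ, hδ, hstep⟩ := exists_forall_norm_add_smul_le hC hdiff hbound hK hnum
    (hρ1 T hT.le le_rfl) hK'
  obtain ⟨N, hN⟩ := exists_nat_gt (T / δ)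
  have hN0 : (0 : ℝ) < N := lt_of_le_of_lt (by positivity) hN
  have hNc : (N : ℂ) ≠ 0 := by exact_mod_cast hN0.ne'
  have hh : T / N ≤ δ := by
    rw [div_le_iff₀ hN0]; rw [div_lt_iff₀ hδ] at hN; linarith
  have hbd : ∀ ζ : ℂ, ‖ζ‖ ≤ T → ∀ j : ℕ, j ≤ N →
      ‖eulerIterate P x (ζ / N) j‖ ≤ ρ (j * (T / N)) := by
    intro ζ hζ j
    induction j with
    | zero => intro _; simp [eulerIterate, hx, hρ0]
    | succ j ih =>
      intro hj
      have hj' : ((j : ℝ) + 1) ≤ N := by exact_mod_cast hj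
      have e : (j : ℝ) * (T / N) + T / N ≤ T := by
        calc (j : ℝ) * (T / N) + T / N = (j + 1) * (T / N) := by ring
          _ ≤ N * (T / N) := by gcongr
          _ = T := by field_simp
      have hTN : 0 < T / N := by positivity
      have h0 : 0 ≤ (j : ℝ) * (T / N) := by positivity
      refine (hstep (T / N) hh _ (hρ1 _ h0 (by linarith)) (hρT _ h0 (by linarith)) _
        (ih (by omega)) (ζ / N) ?_).trans ?_
      · rw [norm_div, Complex.norm_natCast]; gcongr
      · refine (hρ _ _ h0 hTN.le e).trans (le_of_eq ?_)
        congr 1; push_cast; ring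
  have hdf : ∀ j : ℕ, Differentiable ℂ (fun ζ : ℂ ↦ eulerIterate P x (ζ / N) j) := by
    intro j
    induction j with
    | zero => simp [eulerIterate]
    | succ j ih =>
      exact ih.add ((differentiable_id.div_const _).smul (hdiff _ ih))
  have hz : ∀ j : ℕ, eulerIterate P x ((0 : ℂ) / N) j = x := by
    intro j
    induction j with
    | zero => rfl
    | succ j ih => simp only [eulerIterate, ih]; simp
  have hder : ∀ j : ℕ, HasDerivAt (fun ζ : ℂ ↦ eulerIterate P x (ζ / N) j)
      (((j : ℂ) / N) • P x) 0 := by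
    intro j
    induction j with
    | zero => simpa [eulerIterate] using hasDerivAt_const (0 : ℂ) x
    | succ j ih =>
      have h1 : HasDerivAt (fun ζ : ℂ ↦ P (eulerIterate P x (ζ / N) j)) _ 0 :=
        (hdiff _ (hdf j) 0).hasDerivAt
      have h2 : HasDerivAt (fun ζ : ℂ ↦ ζ / (N : ℂ)) (1 / N) 0 := (hasDerivAt_id _).div_const _
      have h3 := ih.add (h2.smul h1)
      refine h3.congr_deriv ?_
      rw [hz j, zero_div, zero_smul, zero_add, ← add_smul]
      push_cast
      congr 1
      ring
  have hfin := Complex.norm_deriv_le_of_forall_mem_sphere_norm_le (c := 0) hT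
    (hdf N).diffContOnCl (C := ρ T) (fun ζ hζ ↦ by
      refine (hbd ζ (by simpa using (mem_sphere_zero_iff_norm.1 hζ).le) N le_rfl).trans
        (le_of_eq ?_)
      congr 1; field_simp)
  rwa [(hder N).deriv, div_self hNc, one_smul] at hfin

theorem le_mul_of_forall_lt_mul {a c K : ℝ} (h : ∀ K', K < K' → a ≤ c * K') : a ≤ c * K := by
  have : Tendsto (fun K' ↦ c * K') (𝓝[>] K) (𝓝 (c * K)) :=
    ((continuous_const.mul continuous_id).tendsto K).mono_left nhdsWithin_le_nhds
  exact ge_of_tendsto this (by filter_upwards [self_mem_nhdsWithin] with K' hK' using h K' hK')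

theorem norm_le_exp_mul_numerical_radius {X : Type*} [NormedAddCommGroup X] [NormedSpace ℂ X]
    {P : X → X} {C K : ℝ} (hC : 0 ≤ C)
    (hdiff : ∀ u : ℂ → X, Differentiable ℂ u → Differentiable ℂ (fun ζ ↦ P (u ζ)))
    (hbound : ∀ x, ‖P x‖ ≤ C * ‖x‖ ^ 1)
    (hK : 0 ≤ K)
    (hnum : ∀ (w : X) (ws : X →L[ℂ] ℂ), ‖ws‖ = 1 → ws w = (‖w‖ : ℂ) → w ≠ 0 →
      ‖ws (P w)‖ ≤ K * ‖w‖ ^ 1) {x : X} (hx : ‖x‖ = 1) :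
    ‖P x‖ ≤ Real.exp 1 * K := by
  refine le_mul_of_forall_lt_mul fun K' hK' ↦ ?_
  have hK'0 : 0 < K' := by linarith
  have := mul_norm_le_of_supersolution hC hdiff hbound hK hnum hK' (T := 1 / K') (by positivity)
    (ρ := fun t ↦ Real.exp (K' * t)) (by simp) (fun t h ht hh _ ↦ by
      have := Real.add_one_le_exp (K' * h)
      have h2 := Real.exp_pos (K' * t)
      rw [mul_add, Real.exp_add]
      nlinarith) (fun t ht _ ↦ Real.one_le_exp (by positivity)) hx
  refine this.trans (le_of_eq ?_)
  field_simp

theorem norm_le_harris_mul_numerical_radius {X : Type*} [NormedAddCommGroup X] [NormedSpace ℂ X]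
    {P : X → X} {n : ℕ} {C K : ℝ} (hC : 0 ≤ C)
    (hdiff : ∀ u : ℂ → X, Differentiable ℂ u → Differentiable ℂ (fun ζ ↦ P (u ζ)))
    (hbound : ∀ x, ‖P x‖ ≤ C * ‖x‖ ^ (n + 2))
    (hK : 0 ≤ K)
    (hnum : ∀ (w : X) (ws : X →L[ℂ] ℂ), ‖ws‖ = 1 → ws w = (‖w‖ : ℂ) → w ≠ 0 →
      ‖ws (P w)‖ ≤ K * ‖w‖ ^ (n + 2)) {x : X} (hx : ‖x‖ = 1) :
    ‖P x‖ ≤ ((n + 2 : ℝ) * (n + 2 : ℝ) ^ (1 / (n + 1 : ℝ))) * K := by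
  refine le_mul_of_forall_lt_mul fun K' hK' ↦ ?_
  have hK'0 : 0 < K' := by linarith
  set p : ℝ := 1 / (n + 1 : ℝ) with hp
  have hp0 : 0 < p := by positivity
  have hn2 : (0 : ℝ) < n + 2 := by positivity
  have hn1 : (0 : ℝ) < n + 1 := by positivity
  have hA : ∀ t, t ≤ 1 / ((n + 2) * K') → 0 < 1 - (n + 1) * K' * t := by
    intro t ht
    have : (n + 1) * K' * t ≤ (n + 1) * K' * (1 / ((n + 2) * K')) := by gcongr
    have e : (n + 1) * K' * (1 / ((n + 2) * K')) = 1 - 1 / (n + 2 : ℝ) := by field_simp; ring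
    have : 0 < 1 / (n + 2 : ℝ) := by positivity
    linarith
  have := mul_norm_le_of_supersolution hC hdiff hbound hK hnum hK' (T := 1 / ((n + 2) * K'))
    (by positivity) (ρ := fun t ↦ (1 - (n + 1) * K' * t) ^ (-p)) (by simp)
    (fun t h ht hh hth ↦ by
      have h1 := hA (t + h) hth
      have h2 := hA t (by linarith)
      set A := 1 - (n + 1) * K' * t
      have e1 : 1 - (n + 1) * K' * (t + h) = A * (1 - (n + 1) * K' * h / A) := by
        simp only [A]; rw [mul_sub, mul_div_cancel₀ _ h2.ne']; ring
      rw [e1] at h1 ⊢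
      have h3 : 0 < 1 - (n + 1) * K' * h / A := pos_of_mul_pos_right h1 h2.le
      have e2 : (A ^ (-p)) ^ (n + 2) = A ^ (-p) * A⁻¹ := by
        rw [← Real.rpow_natCast, ← Real.rpow_mul h2.le, ← Real.rpow_neg_one A,
          ← Real.rpow_add h2]
        congr 1
        rw [hp]; push_cast; field_simp; ring
      have e3 : 1 + K' * h / A ≤ (1 - (n + 1) * K' * h / A) ^ (-p) := by
        have h4 : 1 - (n + 1) * K' * h / A ≤ Real.exp (-((n + 1) * K' * h / A)) := by
          have := Real.add_one_le_exp (-((n + 1) * K' * h / A)); linarith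
        calc 1 + K' * h / A ≤ Real.exp (K' * h / A) := by
              have := Real.add_one_le_exp (K' * h / A); linarith
          _ = Real.exp (-((n + 1) * K' * h / A)) ^ (-p) := by
              rw [← Real.exp_mul, hp]; congr 1; field_simp
          _ ≤ _ := Real.rpow_le_rpow_of_nonpos h3 h4 (by linarith)
      rw [Real.mul_rpow h2.le h3.le, e2]
      have h5 : 0 < A ^ (-p) := Real.rpow_pos_of_pos h2 _
      calc _ = A ^ (-p) * (1 + K' * h / A) := by field_simp
        _ ≤ _ := by gcongr)
    (fun t ht hT ↦ by
      have h2 := hA t hT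
      exact Real.one_le_rpow_of_pos_of_le_one_of_nonpos h2
        (by have : 0 ≤ (n + 1) * K' * t := by positivity
            linarith) (by linarith)) hx
  refine this.trans (le_of_eq ?_)
  have e : 1 - (n + 1) * K' * (1 / ((n + 2) * K')) = (n + 2 : ℝ)⁻¹ := by field_simp; ring
  rw [e, Real.inv_rpow hn2.le, Real.rpow_neg hn2.le, inv_inv]
  field_simp

theorem harris_constant_le (n : ℕ) :
    (n + 2 : ℝ) * (n + 2 : ℝ) ^ (1 / (n + 1 : ℝ)) ≤ 4 * (1 + (1 - Real.log 2) * n) := by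
  have hlog : Real.log 2 < 0.6932 := Real.log_two_lt_d9.trans (by norm_num)
  have hy : (4 + 1.2272 * n : ℝ) ≤ 4 * (1 + (1 - Real.log 2) * n) := by
    have : (0 : ℝ) ≤ n := n.cast_nonneg
    nlinarith
  refine le_trans ?_ hy
  have hn : (0 : ℝ) < n + 2 := by positivity
  have hlarge : ∀ m : ℕ, 12 ≤ m → (m + 2 : ℝ) ≤ 1.2272 ^ (m + 1) := by
    intro m hm
    induction m, hm using Nat.le_induction with
    | base => norm_num
    | succ m hm ih =>
      have : (12 : ℝ) ≤ m := by exact_mod_cast hm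
      rw [pow_succ]
      push_cast
      nlinarith
  have key : (n + 2 : ℝ) ≤ ((4 + 1.2272 * n) / (n + 2)) ^ (n + 1) := by
    rcases lt_or_ge n 12 with h | h
    · interval_cases n <;> norm_num
    · refine (hlarge n h).trans ?_
      gcongr
      rw [le_div_iff₀ hn]
      linarith
  have h2 : (n + 2 : ℝ) ^ (1 / (n + 1 : ℝ)) ≤ (4 + 1.2272 * n) / (n + 2) := by
    have h0 : (0 : ℝ) ≤ (4 + 1.2272 * n) / (n + 2) := by positivity
    have := Real.rpow_le_rpow hn.le key (z := 1 / (n + 1 : ℝ)) (by positivity)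
    rwa [← Real.rpow_natCast, ← Real.rpow_mul h0, Nat.cast_add, Nat.cast_one,
      mul_one_div_cancel (by positivity), Real.rpow_one] at this
  rw [le_div_iff₀ hn] at h2
  linarith

theorem hasSum_harris_majorant {r : ℝ} (h0 : 0 ≤ r) (h1 : r < 1) (L : ℝ) :
    HasSum (fun n : ℕ ↦ r ^ n * (1 + (1 - L) * n)) ((1 - r * L) / (1 - r) ^ 2) := by
  have hr : ‖r‖ < 1 := by rwa [Real.norm_of_nonneg h0]
  have ha := hasSum_geometric_of_lt_one h0 h1
  have hb := (hasSum_coe_mul_geometric_of_norm_lt_one hr).mul_left (1 - L)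
  have h2 : 1 - r ≠ 0 := by linarith
  convert ha.add hb using 1
  · ext n; ring
  · field_simp; ring

section

variable {X : Type*} [NormedAddCommGroup X] [NormedSpace ℂ X] [CompleteSpace X] {G : X → X}

theorem norm_apply_taylorTerm_le (hG : DifferentiableOn ℂ G (ball 0 1)) {n : ℕ} {K : ℝ}
    (hnum : ∀ (v : X) (vs : X →L[ℂ] ℂ), ‖v‖ = 1 → vs v = 1 → ‖vs‖ = 1 →
      ‖vs (taylorTerm G n v)‖ ≤ K)
    (w : X) (ws : X →L[ℂ] ℂ) (hws : ‖ws‖ = 1) (hw : ws w = (‖w‖ : ℂ)) (hw0 : w ≠ 0) :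
    ‖ws (taylorTerm G n w)‖ ≤ K * ‖w‖ ^ n := by
  have hc : (‖w‖ : ℂ) ≠ 0 := by exact_mod_cast norm_ne_zero_iff.2 hw0
  have h := hnum ((‖w‖ : ℂ)⁻¹ • w) ws (by simp [norm_smul, norm_ne_zero_iff.2 hw0])
    (by rw [map_smul, hw, smul_eq_mul, inv_mul_cancel₀ hc]) hws
  have e : w = (‖w‖ : ℂ) • ((‖w‖ : ℂ)⁻¹ • w) := by
    rw [smul_smul, mul_inv_cancel₀ hc, one_smul]
  conv_lhs => rw [e]
  rw [taylorTerm_smul hG, map_smul, norm_smul, norm_pow, Complex.norm_real, norm_norm, mul_comm]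
  gcongr

theorem norm_taylorTerm_add_two_le (hG : DifferentiableOn ℂ G (ball 0 1)) {n : ℕ} {K : ℝ}
    (hK : 0 ≤ K)
    (hnum : ∀ (v : X) (vs : X →L[ℂ] ℂ), ‖v‖ = 1 → vs v = 1 → ‖vs‖ = 1 →
      ‖vs (taylorTerm G (n + 2) v)‖ ≤ K) {v : X} (hv : ‖v‖ = 1) :
    ‖taylorTerm G (n + 2) v‖ ≤ ((n + 2 : ℝ) * (n + 2 : ℝ) ^ (1 / (n + 1 : ℝ))) * K := by
  obtain ⟨M, κ, hM, hκ, hbd⟩ := exists_norm_taylorTerm_le hG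
  exact norm_le_harris_mul_numerical_radius (C := M * κ ^ (n + 2)) (by positivity)
    (differentiable_taylorTerm_comp hG (n + 2))
    (fun x ↦ (hbd _ x).trans_eq (by rw [mul_pow, mul_assoc])) hK
    (norm_apply_taylorTerm_le hG hnum) hv

theorem norm_taylorTerm_one_le (hG : DifferentiableOn ℂ G (ball 0 1)) {K : ℝ} (hK : 0 ≤ K)
    (hnum : ∀ (v : X) (vs : X →L[ℂ] ℂ), ‖v‖ = 1 → vs v = 1 → ‖vs‖ = 1 →
      ‖vs (taylorTerm G 1 v)‖ ≤ K) {v : X} (hv : ‖v‖ = 1) :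
    ‖taylorTerm G 1 v‖ ≤ Real.exp 1 * K := by
  obtain ⟨M, κ, hM, hκ, hbd⟩ := exists_norm_taylorTerm_le hG
  exact norm_le_exp_mul_numerical_radius (C := M * κ ^ 1) (by positivity)
    (differentiable_taylorTerm_comp hG 1)
    (fun x ↦ (hbd _ x).trans_eq (by rw [mul_pow, mul_assoc])) hK
    (norm_apply_taylorTerm_le hG hnum) hv

/-- Growth estimate for a holomorphic map whose numerical range is controlled near the unit
sphere. -/
theorem norm_sub_le_of_re_apply_le (hG : DifferentiableOn ℂ G (ball 0 1)) {b ε V D : ℝ}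
    (hε : 0 < ε)
    (hpd : ∀ z : X, 1 - ε < ‖z‖ → ‖z‖ < 1 → ∀ zs : X →L[ℂ] ℂ,
      zs z = (‖z‖ ^ 2 : ℂ) → ‖zs‖ = ‖z‖ → (zs (G z)).re ≤ b * (1 - ‖z‖ ^ 2))
    (hV : ∀ (v : X) (vs : X →L[ℂ] ℂ), ‖v‖ = 1 → vs v = 1 → ‖vs‖ = 1 →
      ‖vs (fderiv ℂ G 0 v)‖ ≤ V)
    (hD : ∀ (v : X) (vs : X →L[ℂ] ℂ), ‖v‖ = 1 → vs v = 1 → ‖vs‖ = 1 →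
      -(vs (fderiv ℂ G 0 v)).re ≤ D) {z : X} (hz0 : z ≠ 0) (hz : ‖z‖ < 1) :
    ‖G z - G 0‖ ≤ ‖z‖ * (Real.exp 1 * V) + 4 * ‖z‖ ^ 2 * ‖G 0‖
      + 8 * ‖z‖ ^ 2 * ((1 - ‖z‖ * Real.log 2) / (1 - ‖z‖) ^ 2) * D := by
  have hcoef : ∀ (n : ℕ) (v : X) (vs : X →L[ℂ] ℂ), ‖v‖ = 1 → vs v = 1 → ‖vs‖ = 1 →
      ‖vs (taylorTerm G (n + 2) v) + conj (if n = 0 then vs (G 0) else 0)‖ ≤ 2 * D := by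
    intro n v vs hv hvs hvs1
    have hd : DifferentiableOn ℂ (fun ζ : ℂ ↦ vs (G (ζ • v))) (ball 0 1) :=
      vs.differentiable.comp_differentiableOn (differentiableOn_slice hG (by rw [hv, one_mul]))
    have h := norm_taylor_coeff_add_le (b := b) hε hd (fun ζ h1 h2 ↦ by
      have hn : ‖ζ • v‖ = ‖ζ‖ := by rw [norm_smul, hv, mul_one]
      have := hpd (ζ • v) (by rwa [hn]) (by rwa [hn]) (conj ζ • vs)
        (by
          rw [hn, smul_apply, map_smul, hvs, smul_eq_mul, smul_eq_mul, mul_one,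
            Complex.conj_mul'])
        (by rw [norm_smul, hvs1, mul_one, Complex.norm_conj, hn])
      rwa [hn, smul_apply, smul_eq_mul] at this) n
    rw [← map_taylorTerm hG, zero_smul] at h
    refine h.trans ?_
    have e := map_taylorTerm hG 1 v vs
    rw [taylorTerm_one hG, iteratedDeriv_one] at e
    simp only [Nat.factorial_one, Nat.cast_one, inv_one, one_mul] at e
    rw [← e]
    have := hD v vs hv hvs hvs1
    linarith
  set v := (‖z‖ : ℂ)⁻¹ • z with hvdef
  have hc : (‖z‖ : ℂ) ≠ 0 := by exact_mod_cast norm_ne_zero_iff.2 hz0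
  have hv : ‖v‖ = 1 := by simp [hvdef, norm_smul, norm_ne_zero_iff.2 hz0]
  have hzv : (‖z‖ : ℂ) • v = z := by rw [hvdef, smul_smul, mul_inv_cancel₀ hc, one_smul]
  obtain ⟨vs, hvs1, hvs⟩ := exists_dual_vector ℂ v (by rw [hv]; exact one_ne_zero)
  replace hvs : vs v = 1 := by rw [hvs, hv]; simp
  have hV0 : 0 ≤ V := (norm_nonneg _).trans (hV v vs hv hvs hvs1)
  have hD0 : 0 ≤ D := by
    have := (norm_nonneg _).trans (hcoef 0 v vs hv hvs hvs1)
    linarith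
  have hone : ‖taylorTerm G 1 v‖ ≤ Real.exp 1 * V :=
    norm_taylorTerm_one_le hG hV0 (by simpa only [taylorTerm_one hG] using hV) hv
  have hterm : ∀ n : ℕ, ‖taylorTerm G (n + 2) v‖ ≤
      8 * D * (1 + (1 - Real.log 2) * n) + if n = 0 then 4 * ‖G 0‖ else 0 := by
    intro n
    have hle := norm_taylorTerm_add_two_le hG (n := n)
      (K := 2 * D + if n = 0 then ‖G 0‖ else 0) (by positivity) (fun w ws hw hws hws1 ↦ by
        have h1 := hcoef n w ws hw hws hws1
        have h2 : ‖conj (if n = 0 then ws (G 0) else 0)‖ ≤ if n = 0 then ‖G 0‖ else 0 := by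
          rw [Complex.norm_conj]
          split_ifs
          · simpa [hws1] using ws.le_opNorm (G 0)
          · simp
        have h3 := norm_sub_le (ws (taylorTerm G (n + 2) w) +
          conj (if n = 0 then ws (G 0) else 0)) (conj (if n = 0 then ws (G 0) else 0))
        rw [add_sub_cancel_right] at h3
        linarith) hv
    refine (hle.trans (mul_le_mul_of_nonneg_right (harris_constant_le n) (by positivity))).trans
      (le_of_eq ?_)
    split_ifs with h
    · subst h; push_cast; ring
    · ring
  have hsum : HasSum (fun n ↦ (‖z‖ : ℂ) ^ n • taylorTerm G n v) (G z) := by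
    have := hasSum_smul_taylorTerm hG (x := v) (ζ := (‖z‖ : ℂ)) (by rwa [hzv])
    rwa [hzv] at this
  have hsum2 := (hasSum_nat_add_iff' 2).2 hsum
  have hmaj : HasSum (fun n : ℕ ↦ 8 * ‖z‖ ^ 2 * D * (‖z‖ ^ n * (1 + (1 - Real.log 2) * n)) +
      if n = 0 then 4 * ‖z‖ ^ 2 * ‖G 0‖ else 0)
      (8 * ‖z‖ ^ 2 * D * ((1 - ‖z‖ * Real.log 2) / (1 - ‖z‖) ^ 2) + 4 * ‖z‖ ^ 2 * ‖G 0‖) :=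
    ((hasSum_harris_majorant (norm_nonneg z) hz (Real.log 2)).mul_left _).add
      (hasSum_ite_eq 0 (4 * ‖z‖ ^ 2 * ‖G 0‖))
  have htail := hsum2.norm_le_of_bounded hmaj (fun n ↦ by
    rw [norm_smul, norm_pow, Complex.norm_real, norm_norm]
    refine (mul_le_mul_of_nonneg_left (hterm n) (by positivity)).trans (le_of_eq ?_)
    split_ifs with h
    · subst h; push_cast; ring
    · ring)
  have e : G z - G 0 = (‖z‖ : ℂ) • taylorTerm G 1 v +
      (G z - ∑ i ∈ Finset.range 2, (‖z‖ : ℂ) ^ i • taylorTerm G i v) := by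
    rw [Finset.sum_range_succ, Finset.sum_range_one, taylorTerm_zero, pow_zero, pow_one, one_smul]
    abel
  rw [e]
  refine (norm_add_le _ _).trans ?_
  have h1 : ‖(‖z‖ : ℂ) • taylorTerm G 1 v‖ ≤ ‖z‖ * (Real.exp 1 * V) := by
    rw [norm_smul, Complex.norm_real, norm_norm]
    gcongr
  linarith

end

theorem stmt16 {X : Type*} [NormedAddCommGroup X] [NormedSpace ℂ X] [CompleteSpace X]
    (F : X → X) (hF : DifferentiableOn ℂ F (ball 0 1))
    (θ a b ε : ℝ) (hε : 0 < ε)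
    (hpd : ∀ z : X, 1 - ε < ‖z‖ → ‖z‖ < 1 → ∀ zs : X →L[ℂ] ℂ,
      zs z = (‖z‖ ^ 2 : ℂ) → ‖zs‖ = ‖z‖ →
      (Complex.exp (θ * Complex.I) * zs (F z)).re ≤ a * ‖z‖ ^ 2 + b * (1 - ‖z‖ ^ 2)) :
    (∀ r : ℝ, 0 < r → r < 1 → ∃ M : ℝ, ∀ z : X, ‖z‖ ≤ r → ‖F z‖ ≤ M) ∧
    ∀ z ∈ ball (0:X) 1,
      ‖F z - F 0‖ ≤
        ‖z‖ * (|a| + Real.exp 1 *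
          sSup {x : ℝ | ∃ (v : X) (vs : X →L[ℂ] ℂ), ‖v‖ = 1 ∧ vs v = 1 ∧ ‖vs‖ = 1 ∧
            x = ‖Complex.exp (θ * Complex.I) * vs (fderiv ℂ F 0 v) - (a : ℂ) * vs v‖})
        + 4 * ‖z‖ ^ 2 * ‖F 0‖
        + 8 * ‖z‖ ^ 2 * ((1 - ‖z‖ * Real.log 2) / (1 - ‖z‖) ^ 2) *
          (a - sInf {x : ℝ | ∃ (v : X) (vs : X →L[ℂ] ℂ), ‖v‖ = 1 ∧ vs v = 1 ∧ ‖vs‖ = 1 ∧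
            x = (Complex.exp (θ * Complex.I) * vs (fderiv ℂ F 0 v)).re}) := by
  set V := sSup {x : ℝ | ∃ (v : X) (vs : X →L[ℂ] ℂ), ‖v‖ = 1 ∧ vs v = 1 ∧ ‖vs‖ = 1 ∧
    x = ‖Complex.exp (θ * Complex.I) * vs (fderiv ℂ F 0 v) - (a : ℂ) * vs v‖} with hVdef
  set m := sInf {x : ℝ | ∃ (v : X) (vs : X →L[ℂ] ℂ), ‖v‖ = 1 ∧ vs v = 1 ∧ ‖vs‖ = 1 ∧
    x = (Complex.exp (θ * Complex.I) * vs (fderiv ℂ F 0 v)).re} with hmdef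
  set ω := Complex.exp (θ * Complex.I) with hω
  have hω1 : ‖ω‖ = 1 := Complex.norm_exp_ofReal_mul_I θ
  have hA : ∀ (v : X) (vs : X →L[ℂ] ℂ), ‖v‖ = 1 → ‖vs‖ = 1 →
      ‖ω * vs (fderiv ℂ F 0 v)‖ ≤ ‖fderiv ℂ F 0‖ := by
    intro v vs hv hvs1
    rw [norm_mul, hω1, one_mul]
    have h1 := vs.le_opNorm (fderiv ℂ F 0 v)
    have h2 := (fderiv ℂ F 0).le_opNorm v
    rw [hvs1, one_mul] at h1
    rw [hv, mul_one] at h2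
    exact h1.trans h2
  set G : X → X := fun z ↦ ω • F z - (a : ℂ) • z with hGdef
  have hG : DifferentiableOn ℂ G (ball 0 1) := (hF.const_smul ω).sub (by fun_prop)
  have hG' : ∀ v, fderiv ℂ G 0 v = ω • fderiv ℂ F 0 v - (a : ℂ) • v := by
    intro v
    have h1 := (hF.differentiableAt (ball_mem_nhds 0 one_pos)).hasFDerivAt
    have h2 := (h1.const_smul ω).sub ((hasFDerivAt_id (0 : X)).const_smul (a : ℂ))
    have h3 : fderiv ℂ G 0 = _ := h2.fderiv
    rw [h3]; simp
  have hG0 : ‖G 0‖ = ‖F 0‖ := by simp [hGdef, norm_smul, hω1]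
  have hV : ∀ (v : X) (vs : X →L[ℂ] ℂ), ‖v‖ = 1 → vs v = 1 → ‖vs‖ = 1 →
      ‖vs (fderiv ℂ G 0 v)‖ ≤ V := by
    intro v vs hv hvs hvs1
    refine le_csSup ⟨‖fderiv ℂ F 0‖ + |a|, ?_⟩ ⟨v, vs, hv, hvs, hvs1, ?_⟩
    · rintro x ⟨w, ws, hw, hws, hws1, rfl⟩
      refine (norm_sub_le _ _).trans (add_le_add (hA w ws hw hws1) ?_)
      simp [hws]
    · rw [hG', map_sub, map_smul, map_smul, smul_eq_mul, smul_eq_mul]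
  have hm : ∀ (v : X) (vs : X →L[ℂ] ℂ), ‖v‖ = 1 → vs v = 1 → ‖vs‖ = 1 →
      -(vs (fderiv ℂ G 0 v)).re ≤ a - m := by
    intro v vs hv hvs hvs1
    have : m ≤ (ω * vs (fderiv ℂ F 0 v)).re := by
      refine csInf_le ⟨-‖fderiv ℂ F 0‖, ?_⟩ ⟨v, vs, hv, hvs, hvs1, rfl⟩
      rintro x ⟨w, ws, hw, hws, hws1, rfl⟩
      exact neg_le_of_abs_le ((Complex.abs_re_le_norm _).trans (hA w ws hw hws1))
    rw [hG', map_sub, map_smul, map_smul, smul_eq_mul, smul_eq_mul, hvs, mul_one, Complex.sub_re,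
      Complex.ofReal_re]
    linarith
  have hpdG : ∀ z : X, 1 - ε < ‖z‖ → ‖z‖ < 1 → ∀ zs : X →L[ℂ] ℂ,
      zs z = (‖z‖ ^ 2 : ℂ) → ‖zs‖ = ‖z‖ → (zs (G z)).re ≤ b * (1 - ‖z‖ ^ 2) := by
    intro z h1 h2 zs hzs hzs1
    have := hpd z h1 h2 zs hzs hzs1
    have e : ((a : ℂ) * (‖z‖ : ℂ) ^ 2).re = a * ‖z‖ ^ 2 := by
      rw [← Complex.ofReal_pow, ← Complex.ofReal_mul, Complex.ofReal_re]
    simp only [hGdef, map_sub, map_smul, smul_eq_mul, Complex.sub_re, hzs, e]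
    linarith
  have main : ∀ z ∈ ball (0 : X) 1, ‖F z - F 0‖ ≤
      ‖z‖ * (|a| + Real.exp 1 * V) + 4 * ‖z‖ ^ 2 * ‖F 0‖
        + 8 * ‖z‖ ^ 2 * ((1 - ‖z‖ * Real.log 2) / (1 - ‖z‖) ^ 2) * (a - m) := by
    intro z hz
    rcases eq_or_ne z 0 with rfl | hz0
    · simp
    have h := norm_sub_le_of_re_apply_le hG hε hpdG hV hm hz0 (mem_ball_zero_iff.1 hz)
    have e : ω • (F z - F 0) = (G z - G 0) + (a : ℂ) • z := by
      simp only [hGdef, smul_sub, smul_zero]; abel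
    calc ‖F z - F 0‖ = ‖ω • (F z - F 0)‖ := by rw [norm_smul, hω1, one_mul]
      _ ≤ ‖G z - G 0‖ + |a| * ‖z‖ := by
          rw [e]
          refine (norm_add_le _ _).trans (le_of_eq ?_)
          rw [norm_smul (a : ℂ), Complex.norm_real, Real.norm_eq_abs]
      _ ≤ _ := by rw [hG0] at h; linarith
  refine ⟨fun r _ hr1 ↦ ?_, main⟩
  have hcont : ContinuousOn (fun t : ℝ ↦ t * (|a| + Real.exp 1 * V) + 4 * t ^ 2 * ‖F 0‖
        + 8 * t ^ 2 * ((1 - t * Real.log 2) / (1 - t) ^ 2) * (a - m)) (Icc 0 r) := by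
    have hne : ∀ t ∈ Icc 0 r, (1 - t) ^ 2 ≠ 0 := fun t ht ↦
      pow_ne_zero 2 (by linarith [ht.2])
    fun_prop (disch := assumption)
  obtain ⟨M, hM⟩ := (isCompact_Icc (a := (0 : ℝ)) (b := r)).bddAbove_image hcont
  refine ⟨M + ‖F 0‖, fun z hz ↦ ?_⟩
  have h1 := main z (mem_ball_zero_iff.2 (hz.trans_lt hr1))
  have h2 := hM (mem_image_of_mem _ ⟨norm_nonneg z, hz⟩)
  have h3 := norm_sub_norm_le (F z) (F 0)
  linarith
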